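/- Let q be a prime power, n > 1 an integer that is not a prime power, d = (d_1, …, d_k) divisors of n with 1 < k, d_1 < ⋯ < d_k < n, d_i ∤ d_j for i ≠ j, and let a = (a_1, …, a_k) with a_i ∈ F_{q^{d_i}} be d-admissible, i.e., Tr_{d_i/gcd(d_i,d_j)}(a_i) = Tr_{d_j/gcd(d_i,d_j)}(a_j) for all i < j. If q^{n/2 − λ(d)} ≥ W(q^n − 1), where λ(d) = deg(lcm(x^{d_1}−1, …, x^{d_k}−1)) and W counts squarefree divisors, then there exists a primitive element α ∈ F_{q^n} with Tr_{n/d_i}(α) = a_i for all 1 ≤ i ≤ k. -/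

import Mathlib

/-!
The idea is to find a primitive element in the set of all `α` with the prescribed traces, which is a
coset of an additive subgroup, by estimating character sums over that coset.

*The coset.* Let `σ` be the `q`-Frobenius and let `(ZMod p)[X]` act on `K` with `X` acting as `σ`.
Then `Tr_{n/d}` is the action of `(X ^ n - 1) / (X ^ d - 1)`. Comparing cardinalities of kernels and
images gives `im g(σ) = ker f(σ)` whenever `f * g = X ^ n - 1` (`range_aeval_eq_ker_aeval`).
Prescribing the traces therefore amounts to a system of congruences modulo the subgroups
`(X ^ d_i - 1) • K`, which admissibility makes pairwise compatible; over a principal ideal domain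
such a system has a solution (`exists_simultaneous_lift`). With `L = lcm(X ^ d_i - 1)`, all the
traces vanish on the image `V` of `L(σ)`, which has at least `q ^ (n - λ(d))` elements.

*The primitive element.* A nontrivial multiplicative character has sum at most `q ^ (n / 2)` over
any coset of an additive subgroup (`norm_sum_mulChar_coset_le`). For each prime `l ∣ q ^ n - 1` let
`χ_l` be a character of order `l` and `h_l` the average of `χ_l, χ_l ^ 2, …, χ_l ^ (l - 1)`. At an
element that is nonzero but not primitive some `h_l` equals `1`, so if the coset had no primitive
element, the sum of `∏ (1 - h_l)` over its nonzero elements would vanish. Expanding the product, the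
main term is at least `|V| - 1` and each of the other `2 ^ ω - 1` terms, `ω` being the number of
primes `l`, is at most `q ^ (n / 2)`. As `2 ^ ω ≤ W(q ^ n - 1)`, this contradicts
`|V| ≥ W(q ^ n - 1) q ^ (n / 2)`.
-/

open Finset Polynomial

/-- `Tr q N d α = ∑_{i=0}^{N/d-1} α^{q^{d·i}}`, the trace from `F_{q^N}` to `F_{q^d}`. -/
noncomputable def Tr (q N d : ℕ) {K : Type*} [Field K] (α : K) : K :=
  ∑ i ∈ Finset.range (N / d), α ^ q ^ (d * i)

/-- A primitive element: a generator of the multiplicative group of the finite field. -/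
def IsPrimitiveElement {K : Type*} [Field K] (α : K) : Prop :=
  α ≠ 0 ∧ ∀ β : K, β ≠ 0 → ∃ m : ℕ, β = α ^ m

/-- `W(m)`: the number of squarefree divisors of `m`. -/
def W (m : ℕ) : ℕ := (m.divisors.filter Squarefree).card

/-- `λ(d)`: the degree of `lcm(x^{d_1}-1, …, x^{d_k}-1)` over the prime field. -/
noncomputable def lambdaDeg (p k : ℕ) [Fact p.Prime] (d : Fin k → ℕ) : ℕ :=
  ((Finset.univ : Finset (Fin k)).lcm fun i => (X : Polynomial (ZMod p)) ^ d i - 1).natDegree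

/-! ### Multiplicative characters on a coset and the sieve over primes -/

section Characters

lemma mulChar_prod_apply {K ι : Type*} [Field K] (s : Finset ι) (f : ι → MulChar K ℂ) {u : K}
    (hu : u ≠ 0) :
    (∏ i ∈ s, f i) u = ∏ i ∈ s, f i u := by
  classical
  induction s using Finset.induction_on with
  | empty => simpa using MulChar.one_apply hu.isUnit
  | insert i s hi ih => rw [Finset.prod_insert hi, Finset.prod_insert hi, MulChar.mul_apply, ih]

variable {K : Type*} [Field K] [Fintype K]

lemma norm_mulChar_le_one (χ : MulChar K ℂ) (c : K) : ‖χ c‖ ≤ 1 := by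
  rcases eq_or_ne c 0 with rfl | hc
  · simp [MulChar.map_zero]
  · have h : χ c ^ (Fintype.card K - 1) = 1 := by
      rw [← map_pow, FiniteField.pow_card_sub_one_eq_one c hc, map_one]
    have h1 := Fintype.one_lt_card (α := K)
    exact (Complex.norm_eq_one_of_pow_eq_one h (by omega)).le

/-- A nontrivial multiplicative character has sum at most `√|K|` on any coset `b + V` of an additive
subgroup. Expand `χ(x) = G⁻¹ ∑_c χ⁻¹(c) ψ(xc)` with a Gauss sum `G` of modulus `√|K|`; the inner
sums `∑_{v ∈ V} ψ(vc)` are nonnegative reals whose total over `c` is `|K|`. -/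
lemma norm_sum_mulChar_coset_le {χ : MulChar K ℂ} (hχ : χ ≠ 1) (V : AddSubgroup K) [Fintype V]
    (b : K) : ‖∑ v : V, χ (b + v)‖ ≤ √(Fintype.card K) := by
  classical
  obtain ⟨ψ, hψ⟩ : ∃ ψ : AddChar K ℂ, ψ.IsPrimitive :=
    ⟨_, AddChar.FiniteField.primitiveChar_to_Complex_isPrimitive K⟩
  have hχ' : χ⁻¹ ≠ 1 := by simpa using hχ
  set G := gaussSum χ⁻¹ ψ with hG
  have hGnorm : ‖G‖ ^ 2 = Fintype.card K := by
    have h1 : G * star G = Fintype.card K := by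
      rw [hG, star_gaussSum_eq, gaussSum_mul_gaussSum_eq_card hχ' hψ]
    have h2 := Complex.mul_conj' G
    rw [← starRingEnd_apply, h2] at h1
    exact_mod_cast h1
  have hGnorm' : ‖G‖ = √(Fintype.card K) := by
    rw [← hGnorm, Real.sqrt_sq (norm_nonneg _)]
  have hcard : (0 : ℝ) < Fintype.card K := by exact_mod_cast Fintype.card_pos
  have hexp (x : K) : χ x * G = ∑ c, χ⁻¹ c * ψ (x * c) := by
    rcases eq_or_ne x 0 with rfl | hx
    · simp [MulChar.sum_eq_zero_of_ne_one hχ', MulChar.map_zero]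
    · have := gaussSum_mulShift_eq χ⁻¹ ψ (Units.mk0 x hx)
      simp only [inv_inv, Units.val_mk0] at this
      rw [hG, ← this]
      simp [gaussSum]
  -- Each sum over `V` is `|V|` or `0`, by orthogonality for the character `v ↦ ψ(vc)` of `V`.
  have hT (c : K) : ∃ t : ℝ, 0 ≤ t ∧ ∑ v : V, ψ (v * c) = t := by
    let φ : AddChar V ℂ :=
      { toFun := fun v => ψ (v * c)
        map_zero_eq_one' := by simp
        map_add_eq_mul' := fun v w => by
          simp [add_mul, AddChar.map_add_eq_mul] }
    have h := AddChar.sum_eq_ite φ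
    by_cases h0 : φ = 0
    · refine ⟨Fintype.card V, by positivity, ?_⟩
      rw [if_pos h0] at h
      simpa [φ] using h
    · refine ⟨0, le_rfl, ?_⟩
      rw [if_neg h0] at h
      simpa [φ] using h
  choose t ht0 ht using hT
  -- Summing over `c` first, only `v = 0` contributes.
  have htsum : ∑ c, t c = Fintype.card K := by
    have : ((∑ c, t c : ℝ) : ℂ) = Fintype.card K := by
      push_cast
      simp_rw [← ht]
      rw [Finset.sum_comm]
      have h (v : V) : ∑ c, ψ (v * c) = if (v : K) = 0 then (Fintype.card K : ℂ) else 0 := by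
        have := AddChar.sum_mulShift (v : K) hψ
        simpa [mul_comm] using this
      simp_rw [h]
      rw [Finset.sum_eq_single 0] <;> simp
    exact_mod_cast this
  have hmul : (∑ v : V, χ (b + v)) * G = ∑ c, χ⁻¹ c * ψ (b * c) * t c := by
    simp_rw [Finset.sum_mul, hexp, ← ht, Finset.mul_sum]
    rw [Finset.sum_comm]
    refine Finset.sum_congr rfl fun c _ => Finset.sum_congr rfl fun v _ => ?_
    rw [add_mul, AddChar.map_add_eq_mul, mul_assoc]
  have hle : ‖∑ v : V, χ (b + v)‖ * ‖G‖ ≤ Fintype.card K := by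
    rw [← norm_mul, hmul, ← htsum]
    refine (norm_sum_le _ _).trans (Finset.sum_le_sum fun c _ => ?_)
    rw [norm_mul, norm_mul, AddChar.norm_apply, Complex.norm_real, Real.norm_of_nonneg (ht0 c)]
    have : ‖χ⁻¹ c‖ ≤ 1 := norm_mulChar_le_one _ c
    nlinarith [ht0 c]
  rw [hGnorm'] at hle
  refine le_of_mul_le_mul_right (hle.trans_eq ?_) (Real.sqrt_pos.2 hcard)
  exact (Real.mul_self_sqrt hcard.le).symm

lemma exists_prime_root_of_not_isPrimitiveElement {u : K} (hu : u ≠ 0)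
    (h : ¬ IsPrimitiveElement u) :
    ∃ l ∈ (Fintype.card K - 1).primeFactors, ∃ v : K, u = v ^ l := by
  classical
  obtain ⟨g, hg⟩ := IsCyclic.exists_monoid_generator (α := Kˣ)
  have hcard : Fintype.card Kˣ = Fintype.card K - 1 := Fintype.card_units K
  have hord : orderOf g = Fintype.card K - 1 := by
    rw [← hcard, ← Nat.card_eq_fintype_card]
    exact orderOf_eq_card_of_forall_mem_zpowers fun x => by
      rw [← mem_powers_iff_mem_zpowers]; exact hg x
  obtain ⟨k, hk⟩ := hg (Units.mk0 u hu)
  have hk' : u = (g : K) ^ k := by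
    have := congrArg Units.val hk
    simpa using this.symm
  have hnc : ¬ Nat.Coprime (orderOf g) k := by
    intro hc
    refine h ⟨hu, fun β hβ => ?_⟩
    obtain ⟨m, hm⟩ := exists_pow_eq_self_of_coprime hc.symm
    obtain ⟨j, hj⟩ := hg (Units.mk0 β hβ)
    refine ⟨m * j, ?_⟩
    have := congrArg Units.val hj
    rw [← hm] at this
    simp only [Units.val_mk0, Units.val_pow_eq_pow_val] at this
    rw [← this, hk', pow_mul]
  obtain ⟨l, hl, hl1, hl2⟩ := Nat.Prime.not_coprime_iff_dvd.1 hnc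
  obtain ⟨j, rfl⟩ := hl2
  refine ⟨l, ?_, (g : K) ^ j, by rw [hk', ← pow_mul, mul_comm]⟩
  rw [← hord]
  exact Nat.mem_primeFactors.2 ⟨hl, hl1, (orderOf_pos g).ne'⟩

/-- A nonempty product of nontrivial powers of elements of distinct prime orders is nontrivial:
raising it to the product of all the primes but one isolates a single factor. -/
lemma prod_pow_ne_one {M : Type*} [CommMonoid M] {S : Finset ℕ} (hS : S.Nonempty)
    (hp : ∀ l ∈ S, l.Prime) (χ : ℕ → M) (hχ : ∀ l ∈ S, orderOf (χ l) = l)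
    (j : ∀ l ∈ S, ℕ) (hj : ∀ l (h : l ∈ S), j l h ∈ Finset.Ico 1 l) :
    ∏ l ∈ S.attach, χ l ^ j l.1 l.2 ≠ 1 := by
  classical
  obtain ⟨l₀, h₀⟩ := hS
  intro h
  set m := ∏ l ∈ S.erase l₀, l with hm
  have h1 : χ l₀ ^ (j l₀ h₀ * m) = 1 := by
    have h2 := congrArg (· ^ m) h
    simp only [one_pow] at h2
    rw [← Finset.prod_pow, Finset.prod_eq_single ⟨l₀, h₀⟩] at h2
    · rwa [pow_mul]
    · rintro ⟨l, hl⟩ - hne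
      have hne' : l ≠ l₀ := fun h => hne (by simp [h])
      have hd : l ∣ m := Finset.dvd_prod_of_mem _ (Finset.mem_erase.2 ⟨hne', hl⟩)
      obtain ⟨r, hr⟩ := hd
      simp only
      rw [hr, ← pow_mul, ← orderOf_dvd_iff_pow_eq_one, hχ l hl]
      exact ⟨j l hl * r, by ring⟩
    · intro h; exact absurd (Finset.mem_attach _ _) h
  rw [← orderOf_dvd_iff_pow_eq_one, hχ l₀ h₀] at h1
  have hpr := hp l₀ h₀
  have hj0 := Finset.mem_Ico.1 (hj l₀ h₀)
  rcases hpr.dvd_mul.1 h1 with h2 | h2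
  · exact absurd (Nat.le_of_dvd (by omega) h2) (by omega)
  · rw [hm, Prime.dvd_finsetProd_iff hpr.prime] at h2
    obtain ⟨l, hl, hd⟩ := h2
    have := (Nat.prime_dvd_prime_iff_eq hpr (hp l (Finset.mem_of_mem_erase hl))).1 hd
    exact (Finset.mem_erase.1 hl).1 this.symm

/-- The sum of `∏_{l ∈ S} (-h_l)` over the nonzero elements of `b + V` is at most `√|K|` in modulus,
where `h_l` is the average of the nontrivial powers of `χ_l`: the product is, up to sign, an average
of nontrivial multiplicative characters. -/
lemma norm_sum_sieve_term_le {χ : ℕ → MulChar K ℂ} {S : Finset ℕ} (hS : S.Nonempty)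
    (hp : ∀ l ∈ S, l.Prime) (hχ : ∀ l ∈ S, orderOf (χ l) = l) (V : AddSubgroup K) [Fintype V]
    (b : K) [DecidablePred fun v : V => b + (v : K) ≠ 0] :
    ‖∑ v ∈ Finset.univ.filter (fun v : V => b + (v : K) ≠ 0),
        ∏ l ∈ S, -(((l : ℂ) - 1)⁻¹ * ∑ j ∈ Finset.Ico 1 l, χ l (b + v) ^ j)‖ ≤
      √(Fintype.card K) := by
  classical
  set T := S.pi fun l => Finset.Ico 1 l with hT
  let ω : (∀ l ∈ S, ℕ) → MulChar K ℂ := fun j => ∏ l ∈ S.attach, χ l ^ j l.1 l.2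
  have hexp (v : V) (hv : b + v ≠ 0) :
      ∏ l ∈ S, -(((l : ℂ) - 1)⁻¹ * ∑ j ∈ Finset.Ico 1 l, χ l (b + v) ^ j) =
        (∏ l ∈ S, -((l : ℂ) - 1)⁻¹) * ∑ j ∈ T, ω j (b + v) := by
    simp_rw [← neg_mul, Finset.prod_mul_distrib]
    rw [Finset.prod_sum]
    congr 1
    refine Finset.sum_congr rfl fun j hj => ?_
    rw [mulChar_prod_apply _ _ hv]
    refine Finset.prod_congr rfl fun l _ => ?_
    have h1 := (Finset.mem_Ico.1 (Finset.mem_pi.1 hj l.1 l.2)).1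
    rw [MulChar.pow_apply' _ (Nat.one_le_iff_ne_zero.1 h1)]
  have hω (j) (hj : j ∈ T) :
      ‖∑ v ∈ Finset.univ.filter (fun v : V => b + (v : K) ≠ 0), ω j (b + v)‖ ≤
        √(Fintype.card K) := by
    rw [Finset.sum_filter_of_ne]
    · exact norm_sum_mulChar_coset_le
        (prod_pow_ne_one hS hp χ hχ j fun l hl => Finset.mem_pi.1 hj l hl) V b
    · intro v _ h h0
      exact h (by rw [h0, MulChar.map_zero])
  rw [Finset.sum_congr rfl fun v hv => hexp v (Finset.mem_filter.1 hv).2, ← Finset.mul_sum,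
    Finset.sum_comm, norm_mul]
  have hnorm : ‖∏ l ∈ S, -((l : ℂ) - 1)⁻¹‖ * (T.card : ℝ) = 1 := by
    rw [hT, Finset.card_pi, norm_prod]
    push_cast
    rw [← Finset.prod_mul_distrib]
    refine Finset.prod_eq_one fun l hl => ?_
    have h2 := (hp l hl).two_le
    have h2' : (2 : ℝ) ≤ l := by exact_mod_cast h2
    rw [norm_neg, norm_inv, Nat.card_Ico, Nat.cast_sub (by omega), Nat.cast_one,
      show (l : ℂ) - 1 = ((l - 1 : ℝ) : ℂ) by push_cast; rfl, Complex.norm_real,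
      Real.norm_of_nonneg (by linarith)]
    exact inv_mul_cancel₀ (by linarith)
  calc _ ≤ ‖∏ l ∈ S, -((l : ℂ) - 1)⁻¹‖ * (T.card * √(Fintype.card K)) := by
        refine mul_le_mul_of_nonneg_left ?_ (norm_nonneg _)
        refine (norm_sum_le _ _).trans ((Finset.sum_le_sum hω).trans_eq ?_)
        simp
    _ = _ := by rw [← mul_assoc, hnorm, one_mul]

/-- If every nonzero element of `b + V` has `χ_l`-value `1` for some `l ∈ P`, then `V` is small.
The hypothesis makes `∏_{l ∈ P} (1 - h_l)` vanish on the nonzero elements of `b + V`; expanding over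
subsets `S ⊆ P`, the term `S = ∅` counts these elements, and each of the others is at most `√|K|`. -/
lemma card_coset_le_of_sieve {χ : ℕ → MulChar K ℂ} {P : Finset ℕ}
    (hp : ∀ l ∈ P, l.Prime) (hχ : ∀ l ∈ P, orderOf (χ l) = l) (V : AddSubgroup K) (b : K)
    (h : ∀ v ∈ V, b + v ≠ 0 → ∃ l ∈ P, χ l (b + v) = 1) :
    (Nat.card V : ℝ) - 1 ≤ (2 ^ P.card - 1) * √(Fintype.card K) := by
  classical
  let F : Finset ℕ → ℂ := fun S => ∑ v ∈ Finset.univ.filter (fun v : V => b + (v : K) ≠ 0),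
    ∏ l ∈ S, -(((l : ℂ) - 1)⁻¹ * ∑ j ∈ Finset.Ico 1 l, χ l (b + v) ^ j)
  have hzero : ∑ S ∈ P.powerset, F S = 0 := by
    simp only [F]
    rw [Finset.sum_comm]
    refine Finset.sum_eq_zero fun v hv => ?_
    rw [← Finset.prod_one_add]
    obtain ⟨l, hl, h1⟩ := h v v.2 (Finset.mem_filter.1 hv).2
    refine Finset.prod_eq_zero hl ?_
    have h2 := (hp l hl).two_le
    have h3 : (l : ℂ) - 1 ≠ 0 := by
      rw [sub_ne_zero]
      exact_mod_cast (by omega : l ≠ 1)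
    simp only [h1, one_pow, Finset.sum_const, Nat.card_Ico, nsmul_eq_mul, mul_one]
    rw [Nat.cast_sub (by omega), Nat.cast_one, inv_mul_cancel₀ h3]
    ring
  -- At most one element of the coset is zero.
  have hempty : (Nat.card V : ℝ) - 1 ≤ ‖F ∅‖ := by
    have h1 : F ∅ = ((Finset.univ.filter fun v : V => b + (v : K) ≠ 0).card : ℂ) := by simp [F]
    rw [h1, Complex.norm_natCast, sub_le_iff_le_add]
    have h2 : (Finset.univ.filter fun v : V => ¬ (b + (v : K) ≠ 0)).card ≤ 1 := by
      rw [Finset.card_le_one]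
      intro v hv w hw
      simp only [Finset.mem_filter, Finset.mem_univ, true_and, not_not] at hv hw
      exact Subtype.ext (add_left_cancel (hv.trans hw.symm))
    have h3 := Finset.card_filter_add_card_filter_not (s := (Finset.univ : Finset V))
      (fun v : V => b + (v : K) ≠ 0)
    rw [Finset.card_univ, ← Nat.card_eq_fintype_card] at h3
    have h4 : Nat.card V ≤ (Finset.univ.filter fun v : V => b + (v : K) ≠ 0).card + 1 := by omega
    exact_mod_cast h4
  have hsplit : F ∅ = -∑ S ∈ P.powerset.erase ∅, F S := by
    rw [← Finset.add_sum_erase _ _ (Finset.empty_mem_powerset P)] at hzero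
    exact eq_neg_of_add_eq_zero_left hzero
  refine hempty.trans ?_
  rw [hsplit, norm_neg]
  calc _ ≤ ∑ S ∈ P.powerset.erase ∅, √(Fintype.card K) := by
        refine (norm_sum_le _ _).trans (Finset.sum_le_sum fun S hS => ?_)
        obtain ⟨hne, hS⟩ := Finset.mem_erase.1 hS
        have hS := Finset.mem_powerset.1 hS
        exact norm_sum_sieve_term_le (Finset.nonempty_iff_ne_empty.2 hne)
          (fun l hl => hp l (hS hl)) (fun l hl => hχ l (hS hl)) V b
    _ = _ := by
        rw [Finset.sum_const, Finset.card_erase_of_mem (Finset.empty_mem_powerset P),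
          Finset.card_powerset, nsmul_eq_mul, Nat.cast_sub Nat.one_le_two_pow]
        push_cast
        ring

lemma two_pow_card_primeFactors_le_W {m : ℕ} (hm : m ≠ 0) : 2 ^ m.primeFactors.card ≤ W m := by
  rw [← Finset.card_powerset, W]
  refine Finset.card_le_card_of_injOn (fun S => ∏ l ∈ S, l) (fun S hS => ?_) ?_
  · have hS := Finset.mem_powerset.1 hS
    have hd : ∏ l ∈ S, l ∣ m :=
      (Finset.prod_dvd_prod_of_subset _ _ _ hS).trans (Nat.prod_primeFactors_dvd m)
    simp only [Finset.coe_filter, Set.mem_ofPred_eq, Nat.mem_divisors]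
    refine ⟨⟨hd, hm⟩, ?_⟩
    refine Finset.squarefree_prod_of_pairwise_isCoprime ?_ fun l hl =>
      (Nat.prime_of_mem_primeFactors (hS hl)).squarefree
    intro l hl l' hl' hne
    exact Nat.coprime_iff_isRelPrime.1 ((Nat.coprime_primes
      (Nat.prime_of_mem_primeFactors (hS hl)) (Nat.prime_of_mem_primeFactors (hS hl'))).2 hne)
  · intro S hS S' hS' h
    have hS := Finset.mem_powerset.1 hS
    have hS' := Finset.mem_powerset.1 hS'
    have h' := congrArg Nat.primeFactors h
    simp only at h'
    rwa [Nat.primeFactors_prod fun l hl => Nat.prime_of_mem_primeFactors (hS hl),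
      Nat.primeFactors_prod fun l hl => Nat.prime_of_mem_primeFactors (hS' hl)] at h'

/-- A coset of `V` contains a primitive element as soon as `W(|K| - 1) √|K| ≤ |V|`. A nonzero element
that is not primitive is an `l`-th power for some prime `l ∣ |K| - 1`, hence has `χ_l`-value `1` for
a character `χ_l` of order `l`. -/
theorem exists_isPrimitiveElement_mem_coset (V : AddSubgroup K) (b : K)
    (hV : (W (Fintype.card K - 1) : ℝ) * √(Fintype.card K) ≤ Nat.card V) :
    ∃ v ∈ V, IsPrimitiveElement (b + v) := by
  classical
  by_contra! hcon
  set P := (Fintype.card K - 1).primeFactors with hP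
  have hp (l) (hl : l ∈ P) : l.Prime := Nat.prime_of_mem_primeFactors hl
  have hex (l : ℕ) : ∃ χ : MulChar K ℂ, l ∈ P → orderOf χ = l := by
    by_cases hl : l ∈ P
    · obtain ⟨χ, hχ⟩ := MulChar.exists_mulChar_orderOf K (Nat.dvd_of_mem_primeFactors hl)
        (Complex.isPrimitiveRoot_exp l (hp l hl).ne_zero)
      exact ⟨χ, fun _ => hχ⟩
    · exact ⟨1, fun h => absurd h hl⟩
  choose χ hχ using hex
  have h1 := card_coset_le_of_sieve hp hχ V b fun v hv h0 => by
    obtain ⟨l, hl, w, hw⟩ := exists_prime_root_of_not_isPrimitiveElement h0 (hcon v hv)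
    refine ⟨l, hl, ?_⟩
    have hw0 : w ≠ 0 := by
      rintro rfl
      exact h0 (by rw [hw, zero_pow (hp l hl).ne_zero])
    rw [hw, map_pow, ← MulChar.pow_apply' _ (hp l hl).ne_zero]
    rw [show χ l ^ l = 1 from orderOf_dvd_iff_pow_eq_one.1 (hχ l hl).dvd,
      MulChar.one_apply hw0.isUnit]
  have hK1 : 1 < Fintype.card K := Fintype.one_lt_card
  have h2 : ((2 : ℝ) ^ P.card) ≤ W (Fintype.card K - 1) := by
    exact_mod_cast two_pow_card_primeFactors_le_W (by omega)
  have h3 : 1 < √(Fintype.card K : ℝ) := by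
    rw [Real.lt_sqrt zero_le_one]
    exact_mod_cast (by simpa using hK1)
  nlinarith

end Characters

/-! ### The Chinese remainder theorem for modules over a principal ideal domain -/

section CRT

variable {R M : Type*} [CommRing R] [IsDomain R] [IsPrincipalIdealRing R] [AddCommGroup M]
  [Module R M]

/-- Distributivity `(fM + hM) ∩ (gM + hM) ⊆ lcm(f, g)M + hM`. With `f = cf'`, `g = cg'` and
`rf' + tg' = 1`, write `y = rf'y + tg'y` and substitute the expression of `y` through `g` in the
first summand and the one through `f` in the second. -/
lemma exists_common_multiple {f g h : R} {y : M} (hf : ∃ u v : M, y = f • u + h • v)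
    (hg : ∃ u v : M, y = g • u + h • v) :
    ∃ L : R, f ∣ L ∧ g ∣ L ∧ ∃ u v : M, y = L • u + h • v := by
  obtain ⟨c, f', g', r, t, rfl, rfl, hrt⟩ :
      ∃ c f' g' r t : R, f = c * f' ∧ g = c * g' ∧ r * f' + t * g' = 1 := by
    obtain ⟨c, hc⟩ := (IsPrincipalIdealRing.principal (Ideal.span {f, g})).principal
    have hcm : c ∈ Ideal.span {f, g} := by rw [hc]; exact Submodule.mem_span_singleton_self c
    have hfm : f ∈ Ideal.span {c} := by
      have : f ∈ Ideal.span {f, g} := Ideal.subset_span (by simp)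
      rwa [hc] at this
    have hgm : g ∈ Ideal.span {c} := by
      have : g ∈ Ideal.span {f, g} := Ideal.subset_span (by simp)
      rwa [hc] at this
    obtain ⟨f', rfl⟩ := Ideal.mem_span_singleton.1 hfm
    obtain ⟨g', rfl⟩ := Ideal.mem_span_singleton.1 hgm
    obtain ⟨r, t, hrt⟩ := Ideal.mem_span_pair.1 hcm
    -- If `c = 0`, then `f = g = 0`, and the cofactors must be chosen coprime by hand.
    rcases eq_or_ne c 0 with rfl | hc0
    · exact ⟨0, 1, 0, 1, 0, by simp, by simp, by simp⟩
    · refine ⟨c, f', g', r, t, rfl, rfl, mul_left_cancel₀ hc0 ?_⟩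
      linear_combination hrt
  obtain ⟨u, v, hu⟩ := hf
  obtain ⟨w, z, hw⟩ := hg
  refine ⟨c * f' * g', ⟨g', rfl⟩, ⟨f', by ring⟩, r • w + t • u, (r * f') • z + (t * g') • v, ?_⟩
  calc y = (r * f') • y + (t * g') • y := by rw [← add_smul, hrt, one_smul]
    _ = (r * f') • ((c * g') • w + h • z) + (t * g') • ((c * f') • u + h • v) := by
        rw [← hw, ← hu]
    _ = _ := by module

lemma exists_common_multiple_finset {ι : Type*} (S : Finset ι) (f : ι → R) {h : R} {y : M}
    (hf : ∀ i ∈ S, ∃ u v : M, y = f i • u + h • v) :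
    ∃ L : R, (∀ i ∈ S, f i ∣ L) ∧ ∃ u v : M, y = L • u + h • v := by
  classical
  induction S using Finset.induction_on with
  | empty => exact ⟨1, by simp, y, 0, by simp⟩
  | insert i S hi ih =>
    obtain ⟨L, hL, huv⟩ := ih fun j hj => hf j (Finset.mem_insert_of_mem hj)
    obtain ⟨L', h1, h2, h3⟩ := exists_common_multiple huv (hf i (Finset.mem_insert_self i S))
    refine ⟨L', fun j hj => ?_, h3⟩
    rcases Finset.mem_insert.1 hj with rfl | hj
    · exact h2
    · exact (hL j hj).trans h1

/-- Chinese remainder theorem for possibly non-coprime moduli: pairwise compatible congruences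
`β ≡ b i` modulo `f i • M` have a common solution. -/
theorem exists_simultaneous_lift {ι : Type*} (S : Finset ι) (f : ι → R) (b : ι → M)
    (hb : ∀ i ∈ S, ∀ j ∈ S, ∃ u v : M, b i - b j = f i • u + f j • v) :
    ∃ β : M, ∀ i ∈ S, ∃ u : M, β = b i + f i • u := by
  classical
  induction S using Finset.induction_on with
  | empty => exact ⟨0, by simp⟩
  | insert m S hm ih =>
    obtain ⟨β, hβ⟩ := ih fun i hi j hj =>
      hb i (Finset.mem_insert_of_mem hi) j (Finset.mem_insert_of_mem hj)
    obtain ⟨L, hL, u, v, huv⟩ := exists_common_multiple_finset S f (h := f m) (y := β - b m)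
      fun i hi => by
        obtain ⟨u, hu⟩ := hβ i hi
        obtain ⟨u', v', h'⟩ := hb i (Finset.mem_insert_of_mem hi) m (Finset.mem_insert_self m S)
        refine ⟨u + u', v', ?_⟩
        rw [hu, smul_add, add_assoc, ← h']
        abel
    refine ⟨β - L • u, fun i hi => ?_⟩
    rcases Finset.mem_insert.1 hi with rfl | hi
    · exact ⟨v, by rw [sub_eq_iff_eq_add] at huv; rw [huv]; abel⟩
    · obtain ⟨w, hw⟩ := hβ i hi
      obtain ⟨c, rfl⟩ := hL i hi
      exact ⟨w - c • u, by rw [hw]; module⟩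

end CRT

/-! ### The module structure given by the Frobenius map, and traces -/

section Frobenius

variable (p s : ℕ) [Fact p.Prime] {K : Type*} [Field K] [CharP K p] [Algebra (ZMod p) K]

/-- The Frobenius map `x ↦ x ^ q`, `q = p ^ s`, as an endomorphism of `K` over its prime field. The
field `K` is studied as a module over `(ZMod p)[X]` with `X` acting by this map. -/
noncomputable def frobEnd (K : Type*) [Field K] [CharP K p] [Algebra (ZMod p) K] :
    Module.End (ZMod p) K where
  toFun x := x ^ p ^ s
  map_add' x y := add_pow_char_pow x y p s
  map_smul' c x := by
    simp [Algebra.smul_def, mul_pow, ← map_pow, ZMod.pow_card_pow]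

lemma frobEnd_pow_apply (i : ℕ) (x : K) : (frobEnd p s K ^ i) x = x ^ (p ^ s) ^ i := by
  induction i with
  | zero => simp
  | succ i ih =>
    rw [pow_succ', Module.End.mul_apply, ih]
    change (x ^ (p ^ s) ^ i) ^ p ^ s = _
    rw [← pow_mul, ← pow_succ]

lemma Tr_eq_aeval (N d : ℕ) (x : K) :
    Tr (p ^ s) N d x =
      aeval (frobEnd p s K) (∑ i ∈ Finset.range (N / d), ((X : (ZMod p)[X]) ^ d) ^ i) x := by
  simp [Tr, LinearMap.sum_apply, ← pow_mul, frobEnd_pow_apply]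

/-- The kernel of `f(σ)` has at most `q ^ deg f` elements: they are roots of the linearized polynomial
`∑ f_i X ^ (q ^ i)`. -/
lemma card_ker_aeval_le (hs : 0 < s) [Fintype K] {f : (ZMod p)[X]} (hf : f ≠ 0) :
    Nat.card (LinearMap.ker (aeval (frobEnd p s K) f)) ≤ (p ^ s) ^ f.natDegree := by
  classical
  have hp := (Fact.out : p.Prime)
  have hq : 1 < p ^ s := Nat.one_lt_pow hs.ne' hp.one_lt
  let P : K[X] := ∑ i ∈ Finset.range (f.natDegree + 1),
    C (algebraMap (ZMod p) K (f.coeff i)) * X ^ (p ^ s) ^ i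
  have hP : P ≠ 0 := by
    intro h0
    have h1 : P.coeff ((p ^ s) ^ f.natDegree) = algebraMap (ZMod p) K f.leadingCoeff := by
      simp only [P, finsetSum_coeff, coeff_C_mul_X_pow]
      rw [Finset.sum_eq_single f.natDegree]
      · simp
      · intro i _ hi
        exact if_neg fun h => hi (Nat.pow_right_injective hq h).symm
      · simp
    rw [h0, coeff_zero] at h1
    exact hf (leadingCoeff_eq_zero.1 ((map_eq_zero _).1 h1.symm))
  have hdeg : P.natDegree ≤ (p ^ s) ^ f.natDegree := by
    refine natDegree_sum_le_of_forall_le _ _ fun i hi => ?_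
    refine (natDegree_C_mul_X_pow_le _ _).trans ?_
    exact Nat.pow_le_pow_right (by omega) (by have := Finset.mem_range.1 hi; omega)
  have hroot : (LinearMap.ker (aeval (frobEnd p s K) f) : Set K) ⊆ P.roots.toFinset := by
    intro x hx
    have hx : aeval (frobEnd p s K) f x = 0 := hx
    rw [aeval_eq_sum_range, LinearMap.sum_apply] at hx
    simp only [Finset.mem_coe, Multiset.mem_toFinset]
    rw [mem_roots hP, IsRoot.def]
    simpa [P, eval_finsetSum, frobEnd_pow_apply, Algebra.smul_def] using hx
  calc _ = (LinearMap.ker (aeval (frobEnd p s K) f) : Set K).ncard := rfl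
    _ ≤ P.roots.toFinset.card := by
        rw [← Set.ncard_coe_finset]
        exact Set.ncard_le_ncard hroot (Finset.finite_toSet _)
    _ ≤ P.natDegree := (Multiset.toFinset_card_le _).trans (card_roots' P)
    _ ≤ _ := hdeg

lemma card_le_card_range_aeval_mul (hs : 0 < s) [Fintype K] {f : (ZMod p)[X]} (hf : f ≠ 0) :
    Nat.card K ≤
      Nat.card (LinearMap.range (aeval (frobEnd p s K) f)) * (p ^ s) ^ f.natDegree := by
  rw [Submodule.card_eq_card_quotient_mul_card (LinearMap.ker (aeval (frobEnd p s K) f)),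
    Nat.card_congr (LinearMap.quotKerEquivRange (aeval (frobEnd p s K) f)).toEquiv, mul_comm]
  exact Nat.mul_le_mul_left _ (card_ker_aeval_le p s hs hf)

variable {p s}

lemma aeval_X_pow_sub_one_apply (d : ℕ) (x : K) :
    aeval (frobEnd p s K) ((X : (ZMod p)[X]) ^ d - 1) x = x ^ (p ^ s) ^ d - x := by
  simp [frobEnd_pow_apply]

lemma aeval_X_pow_sub_one_eq_zero [Fintype K] {n : ℕ} (hK : Fintype.card K = (p ^ s) ^ n) :
    aeval (frobEnd p s K) ((X : (ZMod p)[X]) ^ n - 1) = 0 := by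
  ext x
  rw [aeval_X_pow_sub_one_apply, ← hK, FiniteField.pow_card, sub_self, LinearMap.zero_apply]

/-- If `f * g = X ^ n - 1`, then `im g(σ) = ker f(σ)`. The inclusion `⊆` holds since `σ ^ n = 1`, and
then the bounds on the kernels of `f(σ)` and `g(σ)` force equality. For `f = X ^ d - 1` this is
surjectivity of the trace onto the subfield with `q ^ d` elements; for `g = X ^ d - 1` it is the
additive Hilbert 90. -/
lemma range_aeval_eq_ker_aeval (hs : 0 < s) [Fintype K] {n : ℕ} (hn : 0 < n)
    (hK : Fintype.card K = (p ^ s) ^ n) {f g : (ZMod p)[X]} (hfg : f * g = X ^ n - 1) :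
    LinearMap.range (aeval (frobEnd p s K) g) = LinearMap.ker (aeval (frobEnd p s K) f) := by
  have hne : f * g ≠ 0 := by
    rw [hfg]; exact X_pow_sub_C_ne_zero hn 1
  have hdeg : f.natDegree + g.natDegree = n := by
    rw [← natDegree_mul (left_ne_zero_of_mul hne) (right_ne_zero_of_mul hne), hfg]
    exact natDegree_X_pow_sub_C
  have hp := (Fact.out : p.Prime)
  have hpos : 0 < (p ^ s) ^ g.natDegree := by have := hp.pos; positivity
  refine SetLike.coe_injective (Set.eq_of_subset_of_ncard_le ?_ ?_ (Set.toFinite _))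
  · rintro _ ⟨x, rfl⟩
    change aeval (frobEnd p s K) f (aeval (frobEnd p s K) g x) = 0
    rw [← Module.End.mul_apply, ← map_mul, hfg, aeval_X_pow_sub_one_eq_zero hK,
      LinearMap.zero_apply]
  · refine (card_ker_aeval_le p s hs (left_ne_zero_of_mul hne)).trans ?_
    have h := card_le_card_range_aeval_mul p s (K := K) hs (right_ne_zero_of_mul hne)
    rw [Nat.card_eq_fintype_card, hK, ← hdeg, pow_add] at h
    exact Nat.le_of_mul_le_mul_right h hpos

/-- The polynomial giving the trace `Tr_{N/d}` is `(X ^ N - 1) / (X ^ d - 1)`. -/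
lemma geom_mul {N d : ℕ} (hd : d ∣ N) :
    (∑ i ∈ Finset.range (N / d), ((X : (ZMod p)[X]) ^ d) ^ i) * (X ^ d - 1) = X ^ N - 1 := by
  rw [geom_sum_mul, ← pow_mul, Nat.mul_div_cancel' hd]

lemma X_pow_gcd_sub_one_mem (a b : ℕ) :
    ∃ r t : (ZMod p)[X], (X : (ZMod p)[X]) ^ a.gcd b - 1 = (X ^ a - 1) * r + (X ^ b - 1) * t := by
  let I : Ideal (ZMod p)[X] := Ideal.span {X ^ a - 1, X ^ b - 1}
  have hq (c : ℕ) : (Ideal.Quotient.mk I X) ^ c = 1 ↔ X ^ c - 1 ∈ I := by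
    rw [← map_pow, ← map_one (Ideal.Quotient.mk I), Ideal.Quotient.eq]
  have ha := (hq a).2 (Ideal.subset_span (by simp))
  have hb := (hq b).2 (Ideal.subset_span (by simp))
  obtain ⟨r, t, h⟩ := Ideal.mem_span_pair.1 ((hq _).1 (pow_gcd_eq_one.2 ⟨ha, hb⟩))
  exact ⟨r, t, by rw [← h]; ring⟩

lemma Tr_Tr {n d e : ℕ} (hd0 : 0 < d) (hd : d ∣ n) (he : e ∣ d) (x : K) :
    Tr (p ^ s) d e (Tr (p ^ s) n d x) = Tr (p ^ s) n e x := by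
  have he0 : 0 < e := Nat.pos_of_dvd_of_pos he hd0
  have hne : (X : (ZMod p)[X]) ^ e - 1 ≠ 0 := X_pow_sub_C_ne_zero he0 1
  simp only [Tr_eq_aeval]
  rw [← Module.End.mul_apply, ← map_mul]
  congr 2
  refine mul_right_cancel₀ hne ?_
  rw [geom_mul (he.trans hd), mul_right_comm, geom_mul he, mul_comm, geom_mul hd]

/-- Every admissible tuple is a tuple of traces. Choose `b i` with `Tr_{n/d_i}(b_i) = a_i`; then
`Tr_{n/d_i}(β) = a_i` says that `β ≡ b_i` modulo the image of `σ ^ d_i - 1`, and admissibility says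
that `b_i - b_j` lies in the image of `σ ^ gcd(d_i, d_j) - 1`, which makes the congruences pairwise
compatible. -/
theorem exists_forall_Tr_eq (hs : 0 < s) [Fintype K] {n k : ℕ} (hn : 0 < n)
    (hK : Fintype.card K = (p ^ s) ^ n) (d : Fin k → ℕ) (hdvd : ∀ i, d i ∣ n)
    (a : Fin k → K) (ha : ∀ i, a i ^ (p ^ s) ^ d i = a i)
    (hadm : ∀ i j : Fin k, Tr (p ^ s) (d i) (Nat.gcd (d i) (d j)) (a i) =
      Tr (p ^ s) (d j) (Nat.gcd (d i) (d j)) (a j)) :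
    ∃ β : K, ∀ i, Tr (p ^ s) n (d i) β = a i := by
  have hd0 (i) : 0 < d i := Nat.pos_of_dvd_of_pos (hdvd i) hn
  have hb (i) : ∃ b : K, Tr (p ^ s) n (d i) b = a i := by
    have hmem : a i ∈ LinearMap.ker (aeval (frobEnd p s K) ((X : (ZMod p)[X]) ^ d i - 1)) := by
      rw [LinearMap.mem_ker, aeval_X_pow_sub_one_apply, ha i, sub_self]
    rw [← range_aeval_eq_ker_aeval hs hn hK ((mul_comm _ _).trans (geom_mul (hdvd i)))] at hmem
    obtain ⟨b, hb⟩ := hmem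
    exact ⟨b, by rw [Tr_eq_aeval, hb]⟩
  choose b hb using hb
  let _ : Module (ZMod p)[X] K := Module.compHom K (aeval (frobEnd p s K)).toRingHom
  have hsmul (f : (ZMod p)[X]) (x : K) : f • x = aeval (frobEnd p s K) f x := rfl
  obtain ⟨β, hβ⟩ := exists_simultaneous_lift Finset.univ
    (fun i => (X : (ZMod p)[X]) ^ d i - 1) b fun i _ j _ => by
      have hi : (d i).gcd (d j) ∣ d i := Nat.gcd_dvd_left _ _
      have hj : (d i).gcd (d j) ∣ d j := Nat.gcd_dvd_right _ _
      have h := hadm i j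
      rw [← hb i, ← hb j, Tr_Tr (hd0 i) (hdvd i) hi, Tr_Tr (hd0 j) (hdvd j) hj, Tr_eq_aeval,
        Tr_eq_aeval, ← sub_eq_zero, ← map_sub, ← LinearMap.mem_ker,
        ← range_aeval_eq_ker_aeval hs hn hK (geom_mul (hi.trans (hdvd i)))] at h
      obtain ⟨x, hx⟩ := h
      obtain ⟨r, t, hrt⟩ := X_pow_gcd_sub_one_mem (p := p) (d i) (d j)
      refine ⟨r • x, t • x, ?_⟩
      rw [← hx, ← hsmul, hrt, add_smul, mul_smul, mul_smul]
  refine ⟨β, fun i => ?_⟩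
  obtain ⟨u, hu⟩ := hβ i (Finset.mem_univ i)
  rw [hu, ← hb i, Tr_eq_aeval, Tr_eq_aeval, map_add, hsmul, ← Module.End.mul_apply, ← map_mul,
    geom_mul (hdvd i), aeval_X_pow_sub_one_eq_zero hK, LinearMap.zero_apply, add_zero]

/-- All the traces vanish on a subgroup of index at most `q ^ λ(d)`, namely the image of `L(σ)` for
`L = lcm(X ^ d_i - 1)`. -/
theorem exists_addSubgroup_Tr_eq_zero (hs : 0 < s) [Fintype K] {n k : ℕ} (hn : 0 < n)
    (hK : Fintype.card K = (p ^ s) ^ n) (d : Fin k → ℕ) (hdvd : ∀ i, d i ∣ n) :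
    ∃ V : AddSubgroup K, (∀ v ∈ V, ∀ i, Tr (p ^ s) n (d i) v = 0) ∧
      (p ^ s) ^ n ≤ Nat.card V * (p ^ s) ^ lambdaDeg p k d := by
  have hd0 (i) : 0 < d i := Nat.pos_of_dvd_of_pos (hdvd i) hn
  set L := (Finset.univ : Finset (Fin k)).lcm fun i => (X : (ZMod p)[X]) ^ d i - 1 with hL
  have hL0 : L ≠ 0 := by
    rw [hL, Finset.lcm_ne_zero_iff]
    exact fun i _ => X_pow_sub_C_ne_zero (hd0 i) 1
  refine ⟨(LinearMap.range (aeval (frobEnd p s K) L)).toAddSubgroup, ?_, ?_⟩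
  · rintro _ ⟨x, rfl⟩ i
    obtain ⟨r, hr⟩ : (X : (ZMod p)[X]) ^ d i - 1 ∣ L := Finset.dvd_lcm (Finset.mem_univ i)
    rw [Tr_eq_aeval, ← Module.End.mul_apply, ← map_mul, hr, ← mul_assoc, geom_mul (hdvd i),
      map_mul, aeval_X_pow_sub_one_eq_zero hK, zero_mul, LinearMap.zero_apply]
  · have := card_le_card_range_aeval_mul p s (K := K) hs hL0
    rwa [Nat.card_eq_fintype_card, hK] at this

end Frobenius

/-- Main theorem: if `q^{n/2-λ(d)} ≥ W(q^n-1)` then for any `d`-admissible tuple `a` there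
is a primitive `α ∈ F_{q^n}` with `Tr_{n/d_i}(α) = a_i` for all `i`. -/
theorem main_theorem (p s q n k : ℕ) [Fact p.Prime] (hs : 0 < s) (hq : q = p ^ s)
    (hn : 1 < n) (hnpp : ¬ IsPrimePow n)
    (hk : 1 < k) (hk' : k < n.divisors.card)
    (K : Type*) [Field K] [Fintype K] (hK : Fintype.card K = q ^ n)
    (d : Fin k → ℕ) (hmono : StrictMono d) (hdvd : ∀ i, d i ∣ n) (hlt : ∀ i, d i < n)
    (hnd : ∀ i j, i ≠ j → ¬ d i ∣ d j)
    (a : Fin k → K) (ha : ∀ i, a i ^ q ^ d i = a i)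
    (hadm : ∀ i j : Fin k,
      Tr q (d i) (Nat.gcd (d i) (d j)) (a i) = Tr q (d j) (Nat.gcd (d i) (d j)) (a j))
    (hineq : (q : ℝ) ^ ((n : ℝ) / 2 - (lambdaDeg p k d : ℝ)) ≥ (W (q ^ n - 1) : ℝ)) :
    ∃ α : K, IsPrimitiveElement α ∧ ∀ i, Tr q n (d i) α = a i := by
  subst hq
  have hp := (Fact.out : p.Prime)
  have : CharP K p := by
    obtain ⟨r, hr⟩ := CharP.exists K
    obtain ⟨m, hrp, hm⟩ := FiniteField.card K r
    rw [hK, ← pow_mul] at hm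
    have h1 : r = p := (Nat.prime_dvd_prime_iff_eq hrp hp).1
      (hrp.dvd_of_dvd_pow (hm ▸ dvd_pow_self r m.pos.ne'))
    rwa [h1] at hr
  let _ : Algebra (ZMod p) K := ZMod.algebra K p
  obtain ⟨β, hβ⟩ := exists_forall_Tr_eq hs (by omega) hK d hdvd a ha hadm
  obtain ⟨V, hV0, hV⟩ := exists_addSubgroup_Tr_eq_zero hs (by omega) hK d hdvd
  have hq0 : (0 : ℝ) < ((p ^ s : ℕ) : ℝ) := by exact_mod_cast pow_pos hp.pos s
  have hsqrt : √(Fintype.card K : ℝ) = ((p ^ s : ℕ) : ℝ) ^ ((n : ℝ) / 2) := by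
    rw [hK, Nat.cast_pow (p ^ s) n, Real.sqrt_eq_rpow, ← Real.rpow_natCast, ← Real.rpow_mul hq0.le]
    congr 1
    ring
  have hbound : (W (Fintype.card K - 1) : ℝ) * √(Fintype.card K) ≤ Nat.card V := by
    have h1 : ((p ^ s : ℕ) : ℝ) ^ n ≤ Nat.card V * ((p ^ s : ℕ) : ℝ) ^ lambdaDeg p k d := by
      exact_mod_cast hV
    have h2 := mul_le_mul_of_nonneg_right hineq
      (Real.rpow_nonneg hq0.le ((n : ℝ) / 2))
    rw [hsqrt, hK]
    refine h2.trans (le_of_mul_le_mul_right (le_trans (le_of_eq ?_) h1)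
      (pow_pos hq0 (lambdaDeg p k d)))
    rw [← Real.rpow_natCast _ (lambdaDeg p k d), ← Real.rpow_natCast _ n, ← Real.rpow_add hq0,
      ← Real.rpow_add hq0]
    congr 1
    ring
  obtain ⟨v, hv, hprim⟩ := exists_isPrimitiveElement_mem_coset V β hbound
  refine ⟨β + v, hprim, fun i => ?_⟩
  have h1 := hβ i
  have h2 := hV0 v hv i
  rw [Tr_eq_aeval] at h1 h2 ⊢
  rw [map_add, h1, h2, add_zero]
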